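/- Let G be an undirected unweighted graph and H a subgraph. Suppose: H contains the first and last portions of a shortest s⇝t path so that dist_H(s,u₁) = dist_G(s,u₁) and dist_H(u₂,t) = dist_G(u₂,t) for nodes u₁, u₂ on the shortest s⇝t path; H contains edges (r₁,u₁) and (r₂,u₂); and dist_H(r₁,r₂) ≤ dist_G(r₁,r₂) + 2. Then dist_H(s,t) ≤ dist_G(s,t) + 6. -/

import Mathlib

/-!
In `H`, travel from `s` to `t` through `u₁`, `r₁`, `r₂`, `u₂`. The two edges `u₁r₁`, `r₂u₂` cost `2`
in `H`; by the triangle inequality in `G`, the same two edges account for another `2` when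
`dist_G(r₁, r₂)` is compared with `dist_G(u₁, u₂)`. So an additive error `k` between `r₁` and `r₂`
becomes an error `k + 4` between `u₁` and `u₂`, and the outer two portions are free.
-/

section

variable {V : Type*} {G H : SimpleGraph V}

theorem graph_edist_triangle4 (u v w x : V) :
    G.edist u x ≤ G.edist u v + G.edist v w + G.edist w x :=
  calc
    G.edist u x ≤ G.edist u w + G.edist w x := G.edist_triangle
    _ ≤ G.edist u v + G.edist v w + G.edist w x := by gcongr; exact G.edist_triangle

theorem graph_edist_le_edist_add_two_of_adj {u v x y : V} (hxu : G.Adj x u) (hyv : G.Adj y v) :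
    G.edist x y ≤ G.edist u v + 2 :=
  calc
    G.edist x y ≤ G.edist x u + G.edist u v + G.edist v y := graph_edist_triangle4 x u v y
    _ = 1 + G.edist u v + 1 := by
      rw [SimpleGraph.edist_eq_one_iff_adj.mpr hxu, SimpleGraph.edist_eq_one_iff_adj.mpr hyv.symm]
    _ = G.edist u v + 2 := by ring

theorem graph_edist_le_edist_add_four_of_adj (hle : H ≤ G) {u v x y : V} {k : ℕ∞}
    (hxu : H.Adj x u) (hyv : H.Adj y v) (hxy : H.edist x y ≤ G.edist x y + k) :
    H.edist u v ≤ G.edist u v + (k + 4) :=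
  calc
    H.edist u v ≤ H.edist x y + 2 := graph_edist_le_edist_add_two_of_adj hxu.symm hyv.symm
    _ ≤ G.edist x y + k + 2 := by gcongr
    _ ≤ G.edist u v + 2 + k + 2 := by
      gcongr
      exact graph_edist_le_edist_add_two_of_adj (hle hxu) (hle hyv)
    _ = G.edist u v + (k + 4) := by ring

theorem walk_length_takeUntil_add_length_dropUntil [DecidableEq V] {s t u : V} (p : G.Walk s t)
    (hu : u ∈ p.support) : (p.takeUntil u hu).length + (p.dropUntil u hu).length = p.length := by
  rw [← SimpleGraph.Walk.length_append, p.take_spec]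

theorem graph_edist_add_edist_le_walk_length [DecidableEq V] {s t u v : V} (p : G.Walk s t)
    (hu : u ∈ p.support) (hv : v ∈ (p.dropUntil u hu).support) :
    G.edist s u + G.edist u v + G.edist v t ≤ p.length := by
  let q := p.dropUntil u hu
  calc
    G.edist s u + G.edist u v + G.edist v t
      ≤ (p.takeUntil u hu).length + (q.takeUntil v hv).length + (q.dropUntil v hv).length := by
        gcongr <;> exact SimpleGraph.edist_le _
    _ = p.length := by
      rw [← walk_length_takeUntil_add_length_dropUntil p hu,
        ← walk_length_takeUntil_add_length_dropUntil q hv]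
      push_cast
      exact add_assoc _ _ _

end

theorem stmt10_general {V : Type*} [DecidableEq V] {G H : SimpleGraph V} (hle : H ≤ G)
    {s t u₁ u₂ r₁ r₂ : V} {k : ℕ∞} (p : G.Walk s t)
    (h1 : u₁ ∈ p.support) (h2 : u₂ ∈ (p.dropUntil u₁ h1).support)
    (hpre : H.edist s u₁ = G.edist s u₁) (hsuf : H.edist u₂ t = G.edist u₂ t)
    (hr1 : H.Adj r₁ u₁) (hr2 : H.Adj r₂ u₂)
    (hmid : H.edist r₁ r₂ ≤ G.edist r₁ r₂ + k) :
    H.edist s t ≤ p.length + (k + 4) :=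
  calc
    H.edist s t ≤ H.edist s u₁ + H.edist u₁ u₂ + H.edist u₂ t := graph_edist_triangle4 s u₁ u₂ t
    _ ≤ G.edist s u₁ + (G.edist u₁ u₂ + (k + 4)) + G.edist u₂ t := by
      rw [hpre, hsuf]
      gcongr
      exact graph_edist_le_edist_add_four_of_adj hle hr1 hr2 hmid
    _ = G.edist s u₁ + G.edist u₁ u₂ + G.edist u₂ t + (k + 4) := by ring
    _ ≤ p.length + (k + 4) := by
      gcongr
      exact graph_edist_add_edist_le_walk_length p h1 h2

/-- The +6 stretch chaining argument: `u₁, u₂` lie (in order) on a shortest `s⇝t` path of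
`G`; the subgraph `H ≤ G` realizes the `G`-distances `s⇝u₁` and `u₂⇝t`, contains the edges
`(r₁,u₁)` and `(r₂,u₂)`, and satisfies `dist_H(r₁,r₂) ≤ dist_G(r₁,r₂) + 2`.  Then
`dist_H(s,t) ≤ dist_G(s,t) + 6`.  Distances are `ℕ∞`-valued. -/
theorem stmt10 {V : Type} [DecidableEq V] (G H : SimpleGraph V) (hle : H ≤ G)
    (s t u₁ u₂ r₁ r₂ : V)
    (p : G.Walk s t) (hshort : (p.length : ℕ∞) = G.edist s t)
    (h1 : u₁ ∈ p.support) (h2 : u₂ ∈ (p.dropUntil u₁ h1).support)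
    (hpre : H.edist s u₁ = G.edist s u₁) (hsuf : H.edist u₂ t = G.edist u₂ t)
    (hr1 : H.Adj r₁ u₁) (hr2 : H.Adj r₂ u₂)
    (hmid : H.edist r₁ r₂ ≤ G.edist r₁ r₂ + 2) :
    H.edist s t ≤ G.edist s t + 6 := by
  rw [← hshort, show (6 : ℕ∞) = 2 + 4 by norm_num]
  exact stmt10_general hle p h1 h2 hpre hsuf hr1 hr2 hmid
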